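/- arXiv:0904.4199 — 2 statements merged into one kernel-verified Lean document; each statement's English description precedes it below -/
import Mathlib

section
/- Let F be a layer solution with data (V, g), with V ≥ ∫_0^L ξ g(ξ) dξ, and set u_∞ = √(2V). Define F_∞ = M(u_∞, ·) if V = ∫_0^L ξ g(ξ) dξ and F_∞ = M(−u_∞, ·) if V > ∫_0^L ξ g(ξ) dξ. Then ∫_0^∞ ∫_{−L}^{L} |F(y, ξ) − F_∞(ξ)| dξ dy < ∞. -/
/-!
Write `u` for the density, `u_∞ = √(2V)` and `D = V - u² / 2` for the defect between the flux of
`F` and the flux of the Maxwellian `M(u, ·)`. Three facts give the theorem.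

*The defect is integrable.* As `F - M(u, ·)` has zero mean and the sign of `ξ - u`, one has
`D = ∫ (ξ - u) (F - M) dξ ≥ 0`. Multiplying the equation by `ξ` and integrating gives
`d/dy ∫ ξ² F dξ = -D`, and `∫ ξ² F dξ` is bounded (`defect_nonneg`, `defect_integrable`).

*The density converges in `L¹`* (`dens_sub_le`). Since `D = (u_∞ - u) (u_∞ + u) / 2`, it suffices
to control the sign of `u`. Let `N(y) = ∫_{ξ<0} ξ F dξ ≥ 0` be the flux carried by negative
velocities; `N(0) = V - ∫ ξ g`. If `N(0) = 0`, the negative velocities are empty at the wall and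
the equation keeps them empty, so `u ≥ 0` everywhere and `|u - u_∞| ≤ 2 D / u_∞`. If `N(0) > 0`,
then `N` is nondecreasing, and `D ≥ N ≥ N(0)` wherever `u ≥ 0` (`negFlux_le_defect`); hence
`|u + u_∞|` is at most `2 u_∞ D / N(0)` where `u ≥ 0` and at most `2 D / u_∞` where `u < 0`.

*Convergence of the density forces that of `F`* (`dist_integrable`). For fixed `ξ`, `M(w, ξ)` is an
endpoint of the range of `F(·, ξ)`, so `|F - M(w, ·)| = σ(ξ) (F - M(w, ·))` with `σ` independent of
`y`. Integrating `σ` times the equation bounds `∫∫ σ (F - M(u, ·))` by boundary terms, while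
`∫ |M(u, ξ) - M(w, ξ)| dξ ≤ |u - w|`.
-/

open MeasureTheory Set Filter

/-- The Maxwellian `M(u, ξ)`: equals `1` on `0 < ξ < u`, `-1` on `u < ξ < 0`, `0` otherwise. -/
noncomputable def Mfun (u ξ : ℝ) : ℝ :=
  if 0 < ξ ∧ ξ < u then 1 else if u < ξ ∧ ξ < 0 then -1 else 0

/-- A layer solution with data `(V, g)`: `F : [0,∞) × (-L,L) → ℝ` measurable, with
`0 ≤ sign ξ · F(y,ξ) ≤ 1`; for each `ξ ≠ 0`, `y ↦ F(y,ξ)` is continuous on `[0,∞)`,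
differentiable on `(0,∞)` with `ξ ∂_y F = M(u(y),ξ) - F`, `u(y) = ∫_{-L}^L F(y,·)`;
`F(0,ξ) = g(ξ)` on `(0,L)`; and `∫_{-L}^L ξ F(y,ξ) dξ = V` for all `y ≥ 0`. -/
structure IsLayerSolution (L V : ℝ) (g : ℝ → ℝ) (F : ℝ → ℝ → ℝ) : Prop where
  meas : Measurable (Function.uncurry F)
  sgnBound : ∀ y ξ, 0 ≤ y → ξ ∈ Set.Ioo (-L) L →
    0 ≤ Real.sign ξ * F y ξ ∧ Real.sign ξ * F y ξ ≤ 1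
  cont : ∀ ξ ∈ Set.Ioo (-L) L, ξ ≠ 0 → ContinuousOn (fun y => F y ξ) (Set.Ici 0)
  eqn : ∀ ξ ∈ Set.Ioo (-L) L, ξ ≠ 0 → ∀ y : ℝ, 0 < y →
    ∃ d : ℝ, HasDerivAt (fun z => F z ξ) d y ∧
      ξ * d = Mfun (∫ ζ in (-L)..L, F y ζ) ξ - F y ξ
  bdry : ∀ ξ ∈ Set.Ioo (0 : ℝ) L, F 0 ξ = g ξ
  flux : ∀ y : ℝ, 0 ≤ y → (∫ ξ in (-L)..L, ξ * F y ξ) = V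

/-! ### Maxwellians -/

lemma Mfun_measurable : Measurable (Function.uncurry Mfun) := by
  unfold Mfun Function.uncurry
  refine Measurable.ite ?_ measurable_const (Measurable.ite ?_ measurable_const measurable_const)
  · exact (measurableSet_lt measurable_const measurable_snd).inter
      (measurableSet_lt measurable_snd measurable_fst)
  · exact (measurableSet_lt measurable_fst measurable_snd).inter
      (measurableSet_lt measurable_snd measurable_const)

lemma Mfun_abs_le (u ξ : ℝ) : |Mfun u ξ| ≤ 1 := by
  unfold Mfun; split_ifs <;> simp

/-- `M(u, ·)` and `M(w, ·)` differ only between `u` and `w`. -/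
lemma Mfun_sub_abs_le (u w ξ : ℝ) :
    |Mfun u ξ - Mfun w ξ| ≤ (uIcc u w).indicator (fun _ => (1 : ℝ)) ξ := by
  by_cases h : ξ ∈ uIcc u w
  · rw [indicator_of_mem h]
    unfold Mfun
    split_ifs <;> first | (norm_num; done) | (exfalso; grind)
  · rw [indicator_of_notMem h]
    rw [mem_uIcc] at h
    push Not at h
    unfold Mfun
    split_ifs <;> first | (norm_num; done) | (exfalso; grind)

/-- Moments of the Maxwellian. The bound on `u` keeps its support inside `(-L, L)`. -/
lemma integral_mul_Mfun {L u : ℝ} (hu : |u| ≤ L) (φ : ℝ → ℝ) :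
    (∫ ξ in Ioo (-L) L, φ ξ * Mfun u ξ) = ∫ ξ in (0 : ℝ)..u, φ ξ := by
  rw [abs_le] at hu
  rcases le_total 0 u with h | h
  · have e : (fun ξ => φ ξ * Mfun u ξ) = (Ioo 0 u).indicator φ := by
      funext ξ
      by_cases hξ : 0 < ξ ∧ ξ < u
      · rw [indicator_of_mem (mem_Ioo.2 hξ), Mfun, if_pos hξ, mul_one]
      · rw [indicator_of_notMem (mt mem_Ioo.1 hξ), Mfun, if_neg hξ, if_neg (by rintro ⟨_, _⟩; linarith), mul_zero]
    rw [e, setIntegral_indicator measurableSet_Ioo, intervalIntegral.integral_of_le h,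
      integral_Ioc_eq_integral_Ioo,
      inter_eq_self_of_subset_right (Ioo_subset_Ioo (by linarith) (by linarith))]
  · have e : (fun ξ => φ ξ * Mfun u ξ) = (Ioo u 0).indicator (fun ξ => -φ ξ) := by
      funext ξ
      by_cases hξ : u < ξ ∧ ξ < 0
      · rw [indicator_of_mem (mem_Ioo.2 hξ), Mfun, if_neg (by rintro ⟨_, _⟩; linarith), if_pos hξ]; ring
      · rw [indicator_of_notMem (mt mem_Ioo.1 hξ), Mfun, if_neg (by rintro ⟨_, _⟩; linarith), if_neg hξ, mul_zero]
    rw [e, setIntegral_indicator measurableSet_Ioo, intervalIntegral.integral_of_ge h,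
      integral_Ioc_eq_integral_Ioo,
      inter_eq_self_of_subset_right (Ioo_subset_Ioo (by linarith) (by linarith)), integral_neg]

/-- The velocity `ξ = 0`, where neither the sign bound nor the equation says anything about `F`, is
negligible. -/
lemma ae_Ioo_ne_zero (L : ℝ) :
    ∀ᵐ ξ ∂(volume.restrict (Ioo (-L) L)), ξ ∈ Ioo (-L) L ∧ ξ ≠ 0 := by
  refine (ae_restrict_mem measurableSet_Ioo).and (ae_restrict_of_ae ?_)
  simp [ae_iff]

lemma integrable_of_abs_le {L C : ℝ} {h : ℝ → ℝ} (hm : Measurable h)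
    (hb : ∀ ξ ∈ Ioo (-L) L, ξ ≠ 0 → |h ξ| ≤ C) :
    Integrable h (volume.restrict (Ioo (-L) L)) := by
  refine Integrable.of_bound hm.aestronglyMeasurable C ?_
  filter_upwards [ae_Ioo_ne_zero L] with ξ hξ using hb ξ hξ.1 hξ.2

/-! ### Integrability and moment balance -/

/-- The density `u(y) = ∫ F(y, ζ) dζ`. -/
noncomputable def dens (L : ℝ) (F : ℝ → ℝ → ℝ) (y : ℝ) : ℝ := ∫ ζ in (-L)..L, F y ζ

/-- The density defect `D(y) = V - u(y)² / 2`. -/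
noncomputable def defect (L V : ℝ) (F : ℝ → ℝ → ℝ) (y : ℝ) : ℝ := V - dens L F y ^ 2 / 2

section
variable {L V : ℝ} {g : ℝ → ℝ} {F : ℝ → ℝ → ℝ}

lemma dens_eq (hL : 0 < L) (y : ℝ) : dens L F y = ∫ ζ in Ioo (-L) L, F y ζ := by
  rw [dens, intervalIntegral.integral_of_le (by linarith), integral_Ioc_eq_integral_Ioo]

lemma dens_measurable (hL : 0 < L) (hF : IsLayerSolution L V g F) : Measurable (dens L F) := by
  have : dens L F = fun y => ∫ ζ in Ioo (-L) L, F y ζ := funext (dens_eq hL)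
  rw [this]
  exact (hF.meas.stronglyMeasurable.integral_prod_right
    (ν := volume.restrict (Ioo (-L) L))).measurable

lemma F_pos (hF : IsLayerSolution L V g F) {y ξ : ℝ} (hy : 0 ≤ y) (h : ξ ∈ Ioo (-L) L)
    (h0 : 0 < ξ) : 0 ≤ F y ξ ∧ F y ξ ≤ 1 := by
  have := hF.sgnBound y ξ hy h
  rwa [Real.sign_of_pos h0, one_mul] at this

lemma F_neg (hF : IsLayerSolution L V g F) {y ξ : ℝ} (hy : 0 ≤ y) (h : ξ ∈ Ioo (-L) L)
    (h0 : ξ < 0) : -1 ≤ F y ξ ∧ F y ξ ≤ 0 := by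
  have := hF.sgnBound y ξ hy h
  rw [Real.sign_of_neg h0] at this
  constructor <;> linarith [this.1, this.2]

lemma F_abs (hF : IsLayerSolution L V g F) {y ξ : ℝ} (hy : 0 ≤ y) (h : ξ ∈ Ioo (-L) L)
    (h0 : ξ ≠ 0) : |F y ξ| ≤ 1 := by
  rw [abs_le]
  rcases lt_or_gt_of_ne h0 with h1 | h1
  · have := F_neg hF hy h h1; constructor <;> linarith
  · have := F_pos hF hy h h1; constructor <;> linarith

lemma F_meas (hF : IsLayerSolution L V g F) (y : ℝ) : Measurable (F y) :=
  hF.meas.of_uncurry_left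

lemma M_meas (u : ℝ) : Measurable (Mfun u) := Mfun_measurable.of_uncurry_left

lemma integrable_mul_F (hF : IsLayerSolution L V g F) {y C : ℝ} (hy : 0 ≤ y) {φ : ℝ → ℝ}
    (hφ : Measurable φ) (hb : ∀ ξ ∈ Ioo (-L) L, |φ ξ| ≤ C) :
    Integrable (fun ξ => φ ξ * F y ξ) (volume.restrict (Ioo (-L) L)) := by
  refine integrable_of_abs_le (C := C) (hφ.mul (F_meas hF y)) fun ξ h h0 => ?_
  have h1 := F_abs hF hy h h0
  have h2 := hb ξ h
  rw [abs_mul]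
  nlinarith [abs_nonneg (φ ξ), abs_nonneg (F y ξ)]

lemma integrable_mul_M (u : ℝ) {C : ℝ} {φ : ℝ → ℝ}
    (hφ : Measurable φ) (hb : ∀ ξ ∈ Ioo (-L) L, |φ ξ| ≤ C) :
    Integrable (fun ξ => φ ξ * Mfun u ξ) (volume.restrict (Ioo (-L) L)) := by
  refine integrable_of_abs_le (C := C) (hφ.mul (M_meas u)) fun ξ h h0 => ?_
  have h1 := Mfun_abs_le u ξ
  have h2 := hb ξ h
  rw [abs_mul]
  nlinarith [abs_nonneg (φ ξ), abs_nonneg (Mfun u ξ)]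

lemma integrable_F (hF : IsLayerSolution L V g F) {y : ℝ} (hy : 0 ≤ y) :
    Integrable (F y) (volume.restrict (Ioo (-L) L)) := by
  simpa using integrable_mul_F hF hy (φ := fun _ => 1) measurable_const (C := 1) (by simp)

lemma integrable_M (u : ℝ) : Integrable (Mfun u) (volume.restrict (Ioo (-L) L)) := by
  simpa using integrable_mul_M (L := L) u (φ := fun _ => 1) measurable_const (C := 1) (by simp)

lemma integrable_mul_sub (hF : IsLayerSolution L V g F) {y C : ℝ} (u : ℝ) (hy : 0 ≤ y) {φ : ℝ → ℝ}
    (hφ : Measurable φ) (hb : ∀ ξ ∈ Ioo (-L) L, |φ ξ| ≤ C) :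
    Integrable (fun ξ => φ ξ * (Mfun u ξ - F y ξ)) (volume.restrict (Ioo (-L) L)) := by
  simp only [mul_sub]
  exact (integrable_mul_M u hφ hb).sub (integrable_mul_F hF hy hφ hb)

lemma integral_indicator_Ioi (hL : 0 < L) :
    (∫ ξ in Ioo (-L) L, (Ioi (0 : ℝ)).indicator (fun _ => (1 : ℝ)) ξ) = L := by
  rw [setIntegral_indicator measurableSet_Ioi]
  have : Ioo (-L) L ∩ Ioi 0 = Ioo 0 L := by
    ext x; simp only [mem_inter_iff, mem_Ioo, mem_Ioi]
    constructor
    · rintro ⟨⟨_, _⟩, _⟩; constructor <;> assumption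
    · rintro ⟨_, _⟩; refine ⟨⟨by linarith, ?_⟩, ?_⟩ <;> assumption
  rw [this]; simp [hL.le]

lemma integral_indicator_Iio (hL : 0 < L) :
    (∫ ξ in Ioo (-L) L, (Iio (0 : ℝ)).indicator (fun _ => (1 : ℝ)) ξ) = L := by
  rw [setIntegral_indicator measurableSet_Iio]
  have : Ioo (-L) L ∩ Iio 0 = Ioo (-L) 0 := by
    ext x; simp only [mem_inter_iff, mem_Ioo, mem_Iio]
    constructor
    · rintro ⟨⟨_, _⟩, _⟩; constructor <;> assumption
    · rintro ⟨_, _⟩; refine ⟨⟨?_, by linarith⟩, ?_⟩ <;> assumption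
  rw [this]; simp [hL.le]

lemma dens_abs (hL : 0 < L) (hF : IsLayerSolution L V g F) {y : ℝ} (hy : 0 ≤ y) :
    |dens L F y| ≤ L := by
  rw [dens_eq hL, abs_le]
  have i1 : Integrable ((Ioi (0 : ℝ)).indicator (fun _ => (1 : ℝ)))
      (volume.restrict (Ioo (-L) L)) := (integrable_const _).indicator measurableSet_Ioi
  have i2 : Integrable ((Iio (0 : ℝ)).indicator (fun _ => (1 : ℝ)))
      (volume.restrict (Ioo (-L) L)) := (integrable_const _).indicator measurableSet_Iio
  constructor
  · suffices h : (∫ ξ in Ioo (-L) L, -(Iio (0 : ℝ)).indicator (fun _ => (1 : ℝ)) ξ) ≤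
        ∫ ζ in Ioo (-L) L, F y ζ by rwa [integral_neg, integral_indicator_Iio hL] at h
    refine integral_mono_ae i2.neg (integrable_F hF hy) ?_
    filter_upwards [ae_Ioo_ne_zero L] with ξ hξ
    rcases lt_or_gt_of_ne hξ.2 with h1 | h1
    · simpa [h1] using (F_neg hF hy hξ.1 h1).1
    · simpa [h1, h1.le, not_lt.2 h1.le] using (F_pos hF hy hξ.1 h1).1
  · refine le_of_le_of_eq ?_ (integral_indicator_Ioi hL)
    refine integral_mono_ae (integrable_F hF hy) i1 ?_
    filter_upwards [ae_Ioo_ne_zero L] with ξ hξ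
    rcases lt_or_gt_of_ne hξ.2 with h1 | h1
    · simpa [h1, not_lt.2 h1.le] using (F_neg hF hy hξ.1 h1).2
    · simpa [h1] using (F_pos hF hy hξ.1 h1).2

/-- Integrating the equation along `y` for a fixed velocity. -/
lemma F_ftc (hL : 0 < L) (hF : IsLayerSolution L V g F) {ξ Y : ℝ} (hY : 0 ≤ Y)
    (h : ξ ∈ Ioo (-L) L) (h0 : ξ ≠ 0) :
    (∫ z in (0 : ℝ)..Y, (Mfun (dens L F z) ξ - F z ξ)) = ξ * (F Y ξ - F 0 ξ) := by
  have hm : Measurable fun z => Mfun (dens L F z) ξ - F z ξ :=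
    (Mfun_measurable.comp ((dens_measurable hL hF).prodMk measurable_const)).sub
      (hF.meas.comp (measurable_id.prodMk measurable_const))
  have := intervalIntegral.integral_eq_sub_of_hasDerivAt_of_le (a := 0) (b := Y)
    (f := fun y => ξ * F y ξ) (f' := fun z => Mfun (dens L F z) ξ - F z ξ) hY
    ((continuousOn_const.mul (hF.cont ξ h h0)).mono Icc_subset_Ici_self)
    (fun z hz => by
      obtain ⟨d, hd, e⟩ := hF.eqn ξ h h0 z hz.1
      rw [dens, ← e]
      exact hd.const_mul ξ)
    (by
      rw [intervalIntegrable_iff_integrableOn_Ioc_of_le hY]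
      refine Integrable.of_bound hm.aestronglyMeasurable 2 ?_
      filter_upwards [ae_restrict_mem measurableSet_Ioc] with z hz
      have h1 := abs_le.1 (F_abs hF hz.1.le h h0)
      have h2 := abs_le.1 (Mfun_abs_le (dens L F z) ξ)
      rw [Real.norm_eq_abs, abs_le]; constructor <;> linarith)
  rw [this]; ring

/-- Moment balance: the evolution of `∫ φ(ξ) ξ F(y, ξ) dξ` for a bounded weight `φ`. -/
lemma moment_balance (hL : 0 < L) (hF : IsLayerSolution L V g F) {Y C : ℝ} (hY : 0 ≤ Y)
    {φ : ℝ → ℝ} (hφ : Measurable φ) (hb : ∀ ξ ∈ Ioo (-L) L, |φ ξ| ≤ C) :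
    (∫ z in (0 : ℝ)..Y, ∫ ξ in Ioo (-L) L, φ ξ * (Mfun (dens L F z) ξ - F z ξ)) =
      ∫ ξ in Ioo (-L) L, φ ξ * (ξ * (F Y ξ - F 0 ξ)) := by
  rw [intervalIntegral.integral_of_le hY, integral_integral_swap]
  · refine integral_congr_ae ?_
    filter_upwards [ae_Ioo_ne_zero L] with ξ hξ
    rw [integral_const_mul, ← intervalIntegral.integral_of_le hY, F_ftc hL hF hY hξ.1 hξ.2]
  · refine Integrable.of_bound (C := C * 2) ?_ ?_
    · refine Measurable.aestronglyMeasurable ?_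
      exact (hφ.comp measurable_snd).mul ((Mfun_measurable.comp
        (((dens_measurable hL hF).comp measurable_fst).prodMk measurable_snd)).sub hF.meas)
    · have h1 : ∀ᵐ p ∂((volume.restrict (Ioc 0 Y)).prod (volume.restrict (Ioo (-L) L))),
          p.1 ∈ Ioc 0 Y := Measure.quasiMeasurePreserving_fst.ae (ae_restrict_mem measurableSet_Ioc)
      have h2 : ∀ᵐ p ∂((volume.restrict (Ioc 0 Y)).prod (volume.restrict (Ioo (-L) L))),
          p.2 ∈ Ioo (-L) L ∧ p.2 ≠ 0 := Measure.quasiMeasurePreserving_snd.ae (ae_Ioo_ne_zero L)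
      filter_upwards [h1, h2] with p hp hq
      have h1 := abs_le.1 (F_abs hF hp.1.le hq.1 hq.2)
      have h2 := abs_le.1 (Mfun_abs_le (dens L F p.1) p.2)
      have h3 : |Mfun (dens L F p.1) p.2 - F p.1 p.2| ≤ 2 := by
        rw [abs_le]; constructor <;> linarith
      have h4 := hb p.2 hq.1
      simp only [Function.uncurry, Real.norm_eq_abs, abs_mul]
      exact mul_le_mul h4 h3 (abs_nonneg _) ((abs_nonneg _).trans h4)

/-! ### The defect and the backward flux -/

lemma abs_le_of_mem {ξ : ℝ} (h : ξ ∈ Ioo (-L) L) : |ξ| ≤ L := (abs_lt.2 h).le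

lemma integral_mul_sub (hF : IsLayerSolution L V g F) {y C : ℝ} (u : ℝ) (hy : 0 ≤ y) {φ : ℝ → ℝ}
    (hφ : Measurable φ) (hb : ∀ ξ ∈ Ioo (-L) L, |φ ξ| ≤ C) :
    (∫ ξ in Ioo (-L) L, φ ξ * (Mfun u ξ - F y ξ)) =
      (∫ ξ in Ioo (-L) L, φ ξ * Mfun u ξ) - ∫ ξ in Ioo (-L) L, φ ξ * F y ξ := by
  simp only [mul_sub]
  exact integral_sub (integrable_mul_M u hφ hb) (integrable_mul_F hF hy hφ hb)

lemma integral_M_sub_F (hL : 0 < L) (hF : IsLayerSolution L V g F) {y : ℝ} (hy : 0 ≤ y) :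
    (∫ ξ in Ioo (-L) L, (Mfun (dens L F y) ξ - F y ξ)) = 0 := by
  have := integral_mul_sub hF (dens L F y) hy (φ := fun _ => 1) measurable_const (C := 1) (by simp)
  rw [integral_mul_Mfun (dens_abs hL hF hy)] at this
  simp only [one_mul] at this
  rw [this, ← dens_eq hL]; simp

lemma integral_id_M_sub_F (hL : 0 < L) (hF : IsLayerSolution L V g F) {y : ℝ} (hy : 0 ≤ y) :
    (∫ ξ in Ioo (-L) L, ξ * (Mfun (dens L F y) ξ - F y ξ)) = -defect L V F y := by
  rw [integral_mul_sub hF (dens L F y) hy (φ := fun ξ => ξ) measurable_id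
    (fun _ h => abs_le_of_mem h), integral_mul_Mfun (dens_abs hL hF hy), integral_id,
    ← integral_Ioc_eq_integral_Ioo, ← intervalIntegral.integral_of_le (by linarith), hF.flux y hy,
    defect]
  ring

/-- Since `M - F` has zero mean, its first moment may be centred at `u`. -/
lemma integral_centred (hL : 0 < L) (hF : IsLayerSolution L V g F) {y : ℝ} (hy : 0 ≤ y) :
    (∫ ξ in Ioo (-L) L, (ξ - dens L F y) * (F y ξ - Mfun (dens L F y) ξ)) = defect L V F y := by
  have i1 := integrable_mul_sub hF (dens L F y) hy (φ := fun ξ => ξ) measurable_id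
    (fun _ h => abs_le_of_mem h)
  have i2 := integrable_mul_sub hF (dens L F y) hy (φ := fun _ => dens L F y) measurable_const
    (fun _ _ => le_rfl)
  have e : ∀ ξ, (ξ - dens L F y) * (F y ξ - Mfun (dens L F y) ξ) =
      dens L F y * (Mfun (dens L F y) ξ - F y ξ) - ξ * (Mfun (dens L F y) ξ - F y ξ) :=
    fun ξ => by ring
  simp only [e]
  rw [integral_sub i2 i1, integral_const_mul, integral_M_sub_F hL hF hy,
    integral_id_M_sub_F hL hF hy]
  ring

lemma integrable_centred (hF : IsLayerSolution L V g F) {y : ℝ} (hy : 0 ≤ y) :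
    Integrable (fun ξ => (ξ - dens L F y) * (F y ξ - Mfun (dens L F y) ξ))
      (volume.restrict (Ioo (-L) L)) := by
  have := (integrable_mul_sub hF (dens L F y) hy (φ := fun ξ => ξ - dens L F y)
    (C := L + |dens L F y|) (by fun_prop)
    (fun ξ h => (abs_sub _ _).trans (add_le_add_left (abs_le_of_mem h) _))).neg
  refine this.congr (Eventually.of_forall fun ξ => ?_)
  simp only [Pi.neg_apply]; ring

/-- The Maxwellian is the minimizer of the kinetic entropies: `F - M(u, ·)` has the sign
of `ξ - u`. -/
lemma centred_nonneg (hF : IsLayerSolution L V g F) {y ξ : ℝ} (u : ℝ) (hy : 0 ≤ y)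
    (h : ξ ∈ Ioo (-L) L) (h0 : ξ ≠ 0) : 0 ≤ (ξ - u) * (F y ξ - Mfun u ξ) := by
  rcases lt_or_gt_of_ne h0 with h1 | h1
  · have := F_neg hF hy h h1
    unfold Mfun
    rw [if_neg (fun a => by linarith [a.1])]
    split_ifs with h2
    · exact mul_nonneg (by linarith [h2.1]) (by linarith)
    · have : ξ ≤ u := not_lt.1 fun h => h2 ⟨h, h1⟩
      exact mul_nonneg_of_nonpos_of_nonpos (by linarith) (by linarith)
  · have := F_pos hF hy h h1
    unfold Mfun
    split_ifs with h2 h3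
    · exact mul_nonneg_of_nonpos_of_nonpos (by linarith [h2.2]) (by linarith)
    · linarith [h3.2]
    · have : u ≤ ξ := not_lt.1 fun h => h2 ⟨h1, h⟩
      exact mul_nonneg (by linarith) (by linarith)

lemma defect_nonneg (hL : 0 < L) (hF : IsLayerSolution L V g F) {y : ℝ} (hy : 0 ≤ y) :
    0 ≤ defect L V F y := by
  rw [← integral_centred hL hF hy]
  refine integral_nonneg_of_ae ?_
  filter_upwards [ae_Ioo_ne_zero L] with ξ hξ using centred_nonneg hF _ hy hξ.1 hξ.2

/-- The flux carried by negative velocities. -/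
noncomputable def negFlux (L : ℝ) (F : ℝ → ℝ → ℝ) (y : ℝ) : ℝ :=
  ∫ ξ in Ioo (-L) L, (Iio (0 : ℝ)).indicator (fun ξ => ξ) ξ * F y ξ

lemma negFlux_integrable (hF : IsLayerSolution L V g F) {y : ℝ} (hy : 0 ≤ y) :
    Integrable (fun ξ => (Iio (0 : ℝ)).indicator (fun ξ => ξ) ξ * F y ξ)
      (volume.restrict (Ioo (-L) L)) := by
  refine integrable_mul_F (C := L) hF hy (measurable_id.indicator measurableSet_Iio) fun ξ h => ?_
  by_cases h1 : ξ ∈ Iio (0 : ℝ)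
  · rw [indicator_of_mem h1]; exact abs_le_of_mem h
  · rw [indicator_of_notMem h1, abs_zero]; linarith [h.1, h.2]

/-- Backward flux forces a defect wherever the density is nonnegative. -/
lemma negFlux_le_defect (hL : 0 < L) (hF : IsLayerSolution L V g F) {y : ℝ} (hy : 0 ≤ y)
    (hu : 0 ≤ dens L F y) : negFlux L F y ≤ defect L V F y := by
  rw [← integral_centred hL hF hy, negFlux]
  refine integral_mono_ae (negFlux_integrable hF hy) (integrable_centred hF hy) ?_
  filter_upwards [ae_Ioo_ne_zero L] with ξ hξ
  by_cases h1 : ξ < 0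
  · have := F_neg hF hy hξ.1 h1
    rw [indicator_of_mem (mem_Iio.2 h1), Mfun, if_neg (fun a => by linarith [a.1]),
      if_neg (fun a => by linarith [a.1])]
    nlinarith
  · rw [indicator_of_notMem (by simpa using h1), zero_mul]
    exact centred_nonneg hF _ hy hξ.1 hξ.2

/-- The backward flux is nondecreasing, because `∫_{ξ<0} F ≤ min(u, 0) = ∫_{ξ<0} M(u, ·)`. -/
lemma negFlux_mono (hL : 0 < L) (hF : IsLayerSolution L V g F) {y : ℝ} (hy : 0 ≤ y) :
    negFlux L F 0 ≤ negFlux L F y := by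
  have hφ : Measurable ((Iio (0 : ℝ)).indicator (fun _ => (1 : ℝ))) :=
    measurable_const.indicator measurableSet_Iio
  have hb : ∀ ξ ∈ Ioo (-L) L, |(Iio (0 : ℝ)).indicator (fun _ => (1 : ℝ)) ξ| ≤ 1 := by
    intro ξ _
    by_cases h1 : ξ < 0 <;> simp [h1]
  have key := moment_balance hL hF hy hφ hb
  have e : (∫ ξ in Ioo (-L) L, (Iio (0 : ℝ)).indicator (fun _ => (1 : ℝ)) ξ *
      (ξ * (F y ξ - F 0 ξ))) = negFlux L F y - negFlux L F 0 := by
    rw [negFlux, negFlux, ← integral_sub (negFlux_integrable hF hy) (negFlux_integrable hF le_rfl)]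
    congr 1
    funext ξ
    by_cases h1 : ξ < 0 <;> simp [h1, mul_sub]
  rw [e] at key
  have : 0 ≤ ∫ z in (0 : ℝ)..y, ∫ ξ in Ioo (-L) L,
      (Iio (0 : ℝ)).indicator (fun _ => (1 : ℝ)) ξ * (Mfun (dens L F z) ξ - F z ξ) := by
    refine intervalIntegral.integral_nonneg hy fun z hz => ?_
    rcases le_or_gt 0 (dens L F z) with hu | hu
    · refine integral_nonneg_of_ae ?_
      filter_upwards [ae_Ioo_ne_zero L] with ξ hξ
      by_cases h1 : ξ < 0
      · have := F_neg hF hz.1 hξ.1 h1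
        rw [indicator_of_mem (mem_Iio.2 h1), Mfun, if_neg (fun a => by linarith [a.1]),
          if_neg (fun a => by linarith [a.1])]
        simp only [Pi.zero_apply]; linarith
      · simp [h1]
    · refine (integral_M_sub_F hL hF hz.1).symm.trans_le ?_
      refine integral_mono_ae ((integrable_M _).sub (integrable_F hF hz.1))
        (integrable_mul_sub hF _ hz.1 hφ hb) ?_
      filter_upwards [ae_Ioo_ne_zero L] with ξ hξ
      by_cases h1 : ξ < 0
      · simp [h1]
      · have h2 : 0 < ξ := lt_of_le_of_ne (not_lt.1 h1) hξ.2.symm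
        have := F_pos hF hz.1 hξ.1 h2
        rw [indicator_of_notMem (by simpa using h1), Mfun, if_neg (fun a => by linarith [a.2]),
          if_neg (fun a => by linarith [a.2])]
        linarith
  linarith

lemma negFlux_pointwise_nonneg (hF : IsLayerSolution L V g F) {y ξ : ℝ} (hy : 0 ≤ y)
    (h : ξ ∈ Ioo (-L) L) :
    0 ≤ (Iio (0 : ℝ)).indicator (fun ξ => ξ) ξ * F y ξ := by
  by_cases h1 : ξ < 0
  · have := F_neg hF hy h h1
    rw [indicator_of_mem (mem_Iio.2 h1)]
    nlinarith
  · simp [h1]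

/-- The incoming data carries the flux that the backward velocities do not. -/
lemma negFlux_zero (hL : 0 < L) (hF : IsLayerSolution L V g F) :
    negFlux L F 0 = V - ∫ ξ in (0 : ℝ)..L, ξ * g ξ := by
  have e1 : (∫ ξ in Ioo (-L) L, ξ * F 0 ξ) = V := by
    rw [← integral_Ioc_eq_integral_Ioo, ← intervalIntegral.integral_of_le (by linarith),
      hF.flux 0 le_rfl]
  have i1 := integrable_mul_F hF le_rfl (φ := fun ξ => ξ) measurable_id
    (fun _ h => abs_le_of_mem h)
  rw [← e1, negFlux, intervalIntegral.integral_of_le hL.le, integral_Ioc_eq_integral_Ioo,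
    eq_sub_iff_add_eq]
  have e2 : (∫ ξ in Ioo 0 L, ξ * g ξ) =
      ∫ ξ in Ioo (-L) L, (Ioo 0 L).indicator (fun ξ => ξ * F 0 ξ) ξ := by
    rw [setIntegral_indicator measurableSet_Ioo,
      inter_eq_self_of_subset_right (Ioo_subset_Ioo (by linarith) le_rfl)]
    refine setIntegral_congr_fun measurableSet_Ioo fun ξ h => ?_
    simp only [hF.bdry ξ h]
  rw [e2, ← integral_add (negFlux_integrable hF le_rfl) (i1.indicator measurableSet_Ioo)]
  refine integral_congr_ae ?_
  filter_upwards [ae_Ioo_ne_zero L] with ξ hξ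
  by_cases h1 : ξ < 0
  · rw [indicator_of_mem (mem_Iio.2 h1), indicator_of_notMem (fun a => by linarith [a.1])]; ring
  · have h2 : 0 < ξ := lt_of_le_of_ne (not_lt.1 h1) hξ.2.symm
    rw [indicator_of_notMem (by simpa using h1), indicator_of_mem (mem_Ioo.2 ⟨h2, hξ.1.2⟩)]; ring

/-- A backward velocity that is empty at the wall stays empty: `F e^{y/ξ} ≤ 0` is nondecreasing
in `y` and vanishes at `y = 0`. -/
lemma F_eq_zero_of_neg (hF : IsLayerSolution L V g F) {ξ y : ℝ} (hy : 0 ≤ y)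
    (h : ξ ∈ Ioo (-L) L) (h1 : ξ < 0) (h0 : F 0 ξ = 0) : F y ξ = 0 := by
  have mono : MonotoneOn (fun z => F z ξ * Real.exp (z / ξ)) (Ici 0) := by
    refine monotoneOn_of_hasDerivWithinAt_nonneg (convex_Ici 0)
      (f' := fun z => Mfun (dens L F z) ξ / ξ * Real.exp (z / ξ))
      ((hF.cont ξ h h1.ne).mul (by fun_prop)) ?_ ?_
    · intro z hz
      rw [interior_Ici] at hz
      obtain ⟨d, hd, e⟩ := hF.eqn ξ h h1.ne z hz
      have hE : HasDerivAt (fun z => Real.exp (z / ξ)) (Real.exp (z / ξ) * (1 / ξ)) z :=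
        ((hasDerivAt_id z).div_const ξ).exp
      have := (hd.mul hE).hasDerivWithinAt (s := interior (Ici 0))
      refine this.congr_deriv ?_
      have h2 : d = (Mfun (dens L F z) ξ - F z ξ) / ξ := by
        rw [eq_div_iff h1.ne, dens, ← e]; ring
      rw [h2]; field_simp; ring
    · intro z _
      refine mul_nonneg (div_nonneg_of_nonpos ?_ h1.le) (Real.exp_pos _).le
      unfold Mfun
      rw [if_neg (fun a => by linarith [a.1])]
      split_ifs <;> norm_num
  have := mono (mem_Ici.2 le_rfl) (mem_Ici.2 hy) hy
  simp only [h0, zero_mul] at this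
  exact le_antisymm (F_neg hF hy h h1).2 (nonneg_of_mul_nonneg_left this (Real.exp_pos _))

/-- Without backward flux at the wall, `F(0, ·)`, and then `F(y, ·)`, vanishes for almost every
`ξ < 0`. -/
lemma dens_nonneg_of_negFlux (hL : 0 < L) (hF : IsLayerSolution L V g F)
    (h0 : negFlux L F 0 = 0) {y : ℝ} (hy : 0 ≤ y) : 0 ≤ dens L F y := by
  rw [negFlux, integral_eq_zero_iff_of_nonneg_ae _ (negFlux_integrable hF le_rfl)] at h0
  · rw [dens_eq hL]
    refine integral_nonneg_of_ae ?_
    filter_upwards [ae_Ioo_ne_zero L, h0] with ξ hξ h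
    simp only [Pi.zero_apply] at h ⊢
    rcases lt_or_gt_of_ne hξ.2 with h1 | h1
    · rw [indicator_of_mem (mem_Iio.2 h1)] at h
      rw [F_eq_zero_of_neg hF hy hξ.1 h1 ((mul_eq_zero.1 h).resolve_left hξ.2)]
    · exact (F_pos hF hy hξ.1 h1).1
  · filter_upwards [ae_Ioo_ne_zero L] with ξ hξ using negFlux_pointwise_nonneg hF le_rfl hξ.1

/-- The total production of any bounded kinetic moment over `[0, Y]` is bounded uniformly in `Y`. -/
lemma moment_bound (hL : 0 < L) (hF : IsLayerSolution L V g F) {Y C : ℝ} (hY : 0 ≤ Y)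
    {φ : ℝ → ℝ} (hφ : Measurable φ) (hb : ∀ ξ ∈ Ioo (-L) L, |φ ξ| ≤ C) :
    |∫ z in (0 : ℝ)..Y, ∫ ξ in Ioo (-L) L, φ ξ * (Mfun (dens L F z) ξ - F z ξ)| ≤
      C * (L * 2) * (2 * L) := by
  rw [moment_balance hL hF hY hφ hb]
  have := norm_integral_le_of_norm_le_const (μ := volume.restrict (Ioo (-L) L))
    (f := fun ξ => φ ξ * (ξ * (F Y ξ - F 0 ξ))) (C := C * (L * 2)) (by
      filter_upwards [ae_Ioo_ne_zero L] with ξ hξ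
      have h1 := abs_le.1 (F_abs hF hY hξ.1 hξ.2)
      have h2 := abs_le.1 (F_abs hF le_rfl hξ.1 hξ.2)
      have h3 : |F Y ξ - F 0 ξ| ≤ 2 := by rw [abs_le]; constructor <;> linarith
      have h4 := hb ξ hξ.1
      have h5 := abs_le_of_mem hξ.1
      simp only [Real.norm_eq_abs, abs_mul]
      exact mul_le_mul h4 (mul_le_mul h5 h3 (abs_nonneg _) hL.le)
        (mul_nonneg (abs_nonneg _) (abs_nonneg _)) ((abs_nonneg _).trans h4))
  rw [Real.norm_eq_abs] at this
  refine this.trans_eq ?_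
  simp only [measureReal_restrict_apply_univ, Real.volume_real_Ioo_of_le (by linarith : -L ≤ L)]
  ring

lemma defect_measurable (hL : 0 < L) (hF : IsLayerSolution L V g F) :
    Measurable (defect L V F) := by
  unfold defect
  exact measurable_const.sub (((dens_measurable hL hF).pow_const 2).div_const 2)

/-- The defect is the dissipation of the bounded moment `∫ ξ² F`, hence integrable. -/
lemma defect_integrable (hL : 0 < L) (hF : IsLayerSolution L V g F) :
    IntegrableOn (defect L V F) (Ioi 0) := by
  refine integrableOn_Ioi_of_intervalIntegral_norm_bounded (L * (L * 2) * (2 * L)) 0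
    (l := atTop) (b := fun n : ℕ => (n : ℝ)) (fun n => ?_) tendsto_natCast_atTop_atTop
    (Eventually.of_forall fun n => ?_)
  · refine Integrable.of_bound (defect_measurable hL hF).aestronglyMeasurable V ?_
    filter_upwards [ae_restrict_mem measurableSet_Ioc] with z hz
    rw [Real.norm_of_nonneg (defect_nonneg hL hF hz.1.le), defect]
    nlinarith [sq_nonneg (dens L F z)]
  · have h := moment_bound hL hF n.cast_nonneg (φ := fun ξ => ξ) measurable_id
      (fun _ h => abs_le_of_mem h)
    refine le_trans (le_of_eq ?_) ((neg_le_abs _).trans h)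
    rw [← intervalIntegral.integral_neg]
    refine intervalIntegral.integral_congr fun z hz => ?_
    rw [uIcc_of_le n.cast_nonneg] at hz
    simp only [integral_id_M_sub_F hL hF hz.1, neg_neg]
    exact Real.norm_of_nonneg (defect_nonneg hL hF hz.1)

/-- The density is within a multiple of the defect of its limit: `√(2V)` if no flux enters
backward at the wall, `-√(2V)` otherwise. -/
lemma dens_sub_le (hL : 0 < L) (hV : 0 ≤ V) (hF : IsLayerSolution L V g F)
    (hVg : (∫ ξ in (0 : ℝ)..L, ξ * g ξ) ≤ V) :
    ∃ C : ℝ, ∀ y, 0 ≤ y → |dens L F y - (if V = ∫ ξ in (0 : ℝ)..L, ξ * g ξ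
      then Real.sqrt (2 * V) else -Real.sqrt (2 * V))| ≤ C * defect L V F y := by
  set s := Real.sqrt (2 * V) with hs
  have hs0 : 0 ≤ s := Real.sqrt_nonneg _
  have hs2 : s ^ 2 = 2 * V := Real.sq_sqrt (by linarith)
  have hD : ∀ y, defect L V F y = (s - dens L F y) * (s + dens L F y) / 2 := fun y => by
    rw [defect]; linarith
  have hle : ∀ y, 0 ≤ y → |dens L F y| ≤ s := fun y hy => by
    refine abs_le_of_sq_le_sq ?_ hs0
    have := defect_nonneg hL hF hy
    rw [defect] at this; linarith
  have hn := negFlux_zero hL hF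
  split_ifs with hc
  · refine ⟨2 / s, fun y hy => ?_⟩
    have hu := dens_nonneg_of_negFlux hL hF (by rw [hn]; linarith) hy
    have h1 := abs_le.1 (hle y hy)
    rw [abs_of_nonpos (by linarith), hD]
    rcases hs0.eq_or_lt with h | h
    -- Here `2 / s` is the junk value `0`, but both sides vanish.
    · rw [← h]; rw [← h] at h1; simp; linarith
    · have : 2 / s * ((s - dens L F y) * (s + dens L F y) / 2) =
          (s - dens L F y) * (s + dens L F y) / s := by field_simp
      rw [this, le_div_iff₀ h]
      nlinarith
  · have hpos : 0 < negFlux L F 0 := by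
      rw [hn]; exact sub_pos.2 (lt_of_le_of_ne hVg (Ne.symm hc))
    have hspos : 0 < s := by
      refine lt_of_le_of_ne hs0 fun h => ?_
      have h1 := hle 0 le_rfl
      rw [← h] at h1
      have h2 : dens L F 0 = 0 := abs_nonpos_iff.1 h1
      have h3 := negFlux_le_defect hL hF le_rfl h2.ge
      rw [hD, h2, ← h] at h3
      linarith
    refine ⟨2 / s + 2 * s / negFlux L F 0, fun y hy => ?_⟩
    have h1 := abs_le.1 (hle y hy)
    have hd := defect_nonneg hL hF hy
    rw [sub_neg_eq_add, abs_of_nonneg (by linarith), add_mul]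
    rcases le_or_gt 0 (dens L F y) with hu | hu
    · have h2 := (negFlux_mono hL hF hy).trans (negFlux_le_defect hL hF hy hu)
      have h3 : 2 * s ≤ 2 * s / negFlux L F 0 * defect L V F y := by
        rw [div_mul_eq_mul_div, le_div_iff₀ hpos]
        exact mul_le_mul_of_nonneg_left h2 (by linarith)
      have : 0 ≤ 2 / s * defect L V F y := by positivity
      linarith
    · have h2 : 2 / s * defect L V F y = (s - dens L F y) * (s + dens L F y) / s := by
        rw [hD]; field_simp
      have h3 : dens L F y + s ≤ 2 / s * defect L V F y := by
        rw [h2, le_div_iff₀ hspos]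
        nlinarith
      have : 0 ≤ 2 * s / negFlux L F 0 * defect L V F y := by positivity
      linarith

/-! ### Convergence of the solution -/

lemma integral_Mfun_sub_le (u w : ℝ) :
    (∫ ξ in Ioo (-L) L, |Mfun u ξ - Mfun w ξ|) ≤ |u - w| := by
  calc (∫ ξ in Ioo (-L) L, |Mfun u ξ - Mfun w ξ|)
      ≤ ∫ ξ in Ioo (-L) L, (uIcc u w).indicator (fun _ => (1 : ℝ)) ξ :=
        integral_mono ((integrable_M u).sub (integrable_M w)).abs
          ((integrable_const _).indicator measurableSet_uIcc) (Mfun_sub_abs_le u w)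
    _ ≤ ∫ ξ, (uIcc u w).indicator (fun _ => (1 : ℝ)) ξ := by
        refine setIntegral_le_integral ?_ (Eventually.of_forall fun ξ =>
          indicator_nonneg (fun _ _ => zero_le_one) ξ)
        exact (integrable_indicator_iff measurableSet_uIcc).2
          (continuousOn_const.integrableOn_compact isCompact_uIcc)
    _ = |u - w| := by
        rw [integral_indicator measurableSet_uIcc]
        simp [measureReal_def, Real.volume_interval, abs_sub_comm]

/-- The sign of `F(y, ξ) - M(w, ξ)` for `ξ ≠ 0`; it does not depend on `y`, because `M(w, ξ)` is an endpoint
of the range allowed for `F(y, ξ)`. -/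
noncomputable def sgnF (w ξ : ℝ) : ℝ := if 0 < ξ then 1 - 2 * Mfun w ξ else -1 - 2 * Mfun w ξ

lemma sgnF_measurable (w : ℝ) : Measurable (sgnF w) :=
  Measurable.ite measurableSet_Ioi (measurable_const.sub ((M_meas w).const_mul 2))
    (measurable_const.sub ((M_meas w).const_mul 2))

lemma sgnF_abs (w ξ : ℝ) : |sgnF w ξ| ≤ 1 := by
  unfold sgnF Mfun
  split_ifs <;> first | (norm_num; done) | (exfalso; grind)

lemma abs_eq_sgnF_mul (hF : IsLayerSolution L V g F) {y ξ : ℝ} (w : ℝ) (hy : 0 ≤ y)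
    (h : ξ ∈ Ioo (-L) L) (h0 : ξ ≠ 0) : |F y ξ - Mfun w ξ| = sgnF w ξ * (F y ξ - Mfun w ξ) := by
  rcases lt_or_gt_of_ne h0 with h1 | h1
  · have := F_neg hF hy h h1
    unfold sgnF Mfun
    rw [if_neg h1.not_gt, if_neg (fun a => by linarith [a.1])]
    split_ifs
    · rw [abs_of_nonneg (by linarith)]; ring
    · rw [abs_of_nonpos (by linarith)]; ring
  · have := F_pos hF hy h h1
    unfold sgnF Mfun
    rw [if_pos h1]
    split_ifs
    · rw [abs_of_nonpos (by linarith)]; ring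
    · linarith
    · rw [abs_of_nonneg (by linarith)]; ring

lemma integrable_abs_sub (hF : IsLayerSolution L V g F) {y : ℝ} (w : ℝ) (hy : 0 ≤ y) :
    Integrable (fun ξ => |F y ξ - Mfun w ξ|) (volume.restrict (Ioo (-L) L)) :=
  ((integrable_F hF hy).sub (integrable_M w)).abs

/-- Splits `F - M(w, ·)` into `F - M(u, ·)`, weighted by the sign, and `M(u, ·) - M(w, ·)`. -/
lemma dist_le (hF : IsLayerSolution L V g F) {y : ℝ} (w : ℝ) (hy : 0 ≤ y) :
    (∫ ξ in Ioo (-L) L, |F y ξ - Mfun w ξ|) ≤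
      -(∫ ξ in Ioo (-L) L, sgnF w ξ * (Mfun (dens L F y) ξ - F y ξ)) + |dens L F y - w| := by
  have i1 := integrable_mul_sub hF (dens L F y) hy (sgnF_measurable w) (fun ξ _ => sgnF_abs w ξ)
  have i2 : Integrable (fun ξ => |Mfun (dens L F y) ξ - Mfun w ξ|)
      (volume.restrict (Ioo (-L) L)) := ((integrable_M _).sub (integrable_M w)).abs
  refine le_trans ?_ (add_le_add_right (integral_Mfun_sub_le (L := L) (dens L F y) w) _)
  rw [← integral_neg]
  refine le_of_le_of_eq ?_ (integral_add i1.neg i2)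
  refine integral_mono_ae (integrable_abs_sub hF w hy) (i1.neg.add i2) ?_
  filter_upwards [ae_Ioo_ne_zero L] with ξ hξ
  rw [abs_eq_sgnF_mul hF w hy hξ.1 hξ.2]
  have h1 : sgnF w ξ * (Mfun (dens L F y) ξ - Mfun w ξ) ≤ |Mfun (dens L F y) ξ - Mfun w ξ| := by
    refine (le_abs_self _).trans ?_
    rw [abs_mul]
    exact mul_le_of_le_one_left (abs_nonneg _) (sgnF_abs w ξ)
  linarith

lemma dist_measurable (hF : IsLayerSolution L V g F) (w : ℝ) :
    Measurable fun y => ∫ ξ in Ioo (-L) L, |F y ξ - Mfun w ξ| := by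
  have : Measurable (Function.uncurry fun y ξ => |F y ξ - Mfun w ξ|) :=
    (hF.meas.sub ((M_meas w).comp measurable_snd)).abs
  exact (this.stronglyMeasurable.integral_prod_right
    (ν := volume.restrict (Ioo (-L) L))).measurable

/-- If the density converges in `L¹` to `w`, then the solution converges in `L¹` to `M(w, ·)`. -/
lemma dist_integrable (hL : 0 < L) (hF : IsLayerSolution L V g F) (w : ℝ)
    (hw : IntegrableOn (fun y => |dens L F y - w|) (Ioi 0)) :
    IntegrableOn (fun y => ∫ ξ in Ioo (-L) L, |F y ξ - Mfun w ξ|) (Ioi 0) := by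
  have hi : ∀ n : ℕ, IntervalIntegrable (fun y => ∫ ξ in Ioo (-L) L, |F y ξ - Mfun w ξ|)
      volume 0 n := fun n => by
    rw [intervalIntegrable_iff_integrableOn_Ioc_of_le n.cast_nonneg]
    refine Integrable.of_bound (dist_measurable hF w).aestronglyMeasurable
      (2 * (volume.restrict (Ioo (-L) L)).real univ) ?_
    filter_upwards [ae_restrict_mem measurableSet_Ioc] with z hz
    refine norm_integral_le_of_norm_le_const ?_
    filter_upwards [ae_Ioo_ne_zero L] with ξ hξ
    have h1 := abs_le.1 (F_abs hF hz.1.le hξ.1 hξ.2)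
    have h2 := abs_le.1 (Mfun_abs_le w ξ)
    rw [Real.norm_eq_abs, abs_abs, abs_le]; constructor <;> linarith
  have hs : ∀ n : ℕ, IntervalIntegrable (fun y => ∫ ξ in Ioo (-L) L,
      sgnF w ξ * (Mfun (dens L F y) ξ - F y ξ)) volume 0 n := fun n => by
    have hm : Measurable (Function.uncurry fun y ξ =>
        sgnF w ξ * (Mfun (dens L F y) ξ - F y ξ)) :=
      ((sgnF_measurable w).comp measurable_snd).mul ((Mfun_measurable.comp
        (((dens_measurable hL hF).comp measurable_fst).prodMk measurable_snd)).sub hF.meas)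
    rw [intervalIntegrable_iff_integrableOn_Ioc_of_le n.cast_nonneg]
    refine Integrable.of_bound (hm.stronglyMeasurable.integral_prod_right
      (ν := volume.restrict (Ioo (-L) L))).measurable.aestronglyMeasurable
      (2 * (volume.restrict (Ioo (-L) L)).real univ) ?_
    filter_upwards [ae_restrict_mem measurableSet_Ioc] with z hz
    refine norm_integral_le_of_norm_le_const ?_
    filter_upwards [ae_Ioo_ne_zero L] with ξ hξ
    have h1 := abs_le.1 (F_abs hF hz.1.le hξ.1 hξ.2)
    have h2 := abs_le.1 (Mfun_abs_le (dens L F z) ξ)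
    have h3 : |Mfun (dens L F z) ξ - F z ξ| ≤ 2 := by rw [abs_le]; constructor <;> linarith
    rw [Real.norm_eq_abs, abs_mul]
    nlinarith [sgnF_abs w ξ, abs_nonneg (sgnF w ξ), abs_nonneg (Mfun (dens L F z) ξ - F z ξ)]
  have hwn : ∀ n : ℕ, IntervalIntegrable (fun y => |dens L F y - w|) volume 0 n := fun n => by
    rw [intervalIntegrable_iff_integrableOn_Ioc_of_le n.cast_nonneg]
    exact hw.mono_set Ioc_subset_Ioi_self
  refine integrableOn_Ioi_of_intervalIntegral_norm_bounded
    (1 * (L * 2) * (2 * L) + ∫ y in Ioi 0, |dens L F y - w|) 0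
    (l := atTop) (b := fun n : ℕ => (n : ℝ)) (fun n => ?_) tendsto_natCast_atTop_atTop
    (Eventually.of_forall fun n => ?_)
  · exact (intervalIntegrable_iff_integrableOn_Ioc_of_le n.cast_nonneg).1 (hi n)
  · have h := moment_bound hL hF n.cast_nonneg (sgnF_measurable w) (fun ξ _ => sgnF_abs w ξ)
    calc (∫ y in (0 : ℝ)..n, ‖∫ ξ in Ioo (-L) L, |F y ξ - Mfun w ξ|‖)
        ≤ ∫ y in (0 : ℝ)..n, (-(∫ ξ in Ioo (-L) L,
            sgnF w ξ * (Mfun (dens L F y) ξ - F y ξ)) + |dens L F y - w|) := by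
          refine intervalIntegral.integral_mono_on n.cast_nonneg (hi n).norm
            ((hs n).neg.add (hwn n)) fun y hy => ?_
          rw [Real.norm_of_nonneg (integral_nonneg fun _ => abs_nonneg _)]
          exact dist_le hF w hy.1
      _ = -(∫ y in (0 : ℝ)..n, ∫ ξ in Ioo (-L) L,
            sgnF w ξ * (Mfun (dens L F y) ξ - F y ξ)) + ∫ y in (0 : ℝ)..n, |dens L F y - w| := by
          rw [← intervalIntegral.integral_neg]
          exact intervalIntegral.integral_add (hs n).neg (hwn n)
      _ ≤ _ := by
          refine add_le_add ((neg_le_abs _).trans h) ?_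
          rw [intervalIntegral.integral_of_le n.cast_nonneg]
          exact setIntegral_mono_set hw (Eventually.of_forall fun _ => abs_nonneg _)
            (LE.le.eventuallyLE Ioc_subset_Ioi_self)

end

theorem stmt15 (L V : ℝ) (hL : 0 < L) (g : ℝ → ℝ) (hgm : Measurable g)
    (hg01 : ∀ ξ ∈ Set.Ioo (0 : ℝ) L, g ξ ∈ Set.Icc (0 : ℝ) 1)
    (hV : V ∈ Set.Icc 0 (L ^ 2 / 2))
    (hVg : (∫ ξ in (0 : ℝ)..L, ξ * g ξ) ≤ V)
    (F : ℝ → ℝ → ℝ) (hF : IsLayerSolution L V g F)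
    (Finf : ℝ → ℝ)
    (hFinf : Finf = if V = ∫ ξ in (0 : ℝ)..L, ξ * g ξ
      then Mfun (Real.sqrt (2 * V)) else Mfun (-Real.sqrt (2 * V))) :
    (∫⁻ p in Set.Ici (0 : ℝ) ×ˢ Set.Ioo (-L) L,
      ENNReal.ofReal |F p.1 p.2 - Finf p.2|) < ⊤ := by
  obtain ⟨C, hC⟩ := dens_sub_le hL hV.1 hF hVg
  rw [← apply_ite Mfun] at hFinf
  generalize (if V = ∫ ξ in (0 : ℝ)..L, ξ * g ξ
      then Real.sqrt (2 * V) else -Real.sqrt (2 * V)) = w at hC hFinf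
  subst hFinf
  have hw : IntegrableOn (fun y => |dens L F y - w|) (Ioi 0) := by
    refine Integrable.mono' ((defect_integrable hL hF).const_mul C)
      ((dens_measurable hL hF).sub_const w).abs.aestronglyMeasurable ?_
    filter_upwards [ae_restrict_mem measurableSet_Ioi] with y hy
    rw [Real.norm_eq_abs, abs_abs]
    exact hC y (le_of_lt hy)
  have hA := dist_integrable hL hF w hw
  have hm : Measurable fun p : ℝ × ℝ => ENNReal.ofReal |F p.1 p.2 - Mfun w p.2| :=
    (hF.meas.sub ((M_meas w).comp measurable_snd)).abs.ennreal_ofReal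
  rw [Measure.volume_eq_prod, ← Measure.prod_restrict, lintegral_prod _ hm.aemeasurable,
    ← Measure.restrict_congr_set Ioi_ae_eq_Ici]
  refine lt_of_le_of_lt (le_of_eq ?_) hA.lintegral_lt_top
  refine setLIntegral_congr_fun measurableSet_Ioi fun y hy => ?_
  exact (ofReal_integral_eq_lintegral_ofReal (integrable_abs_sub hF w (le_of_lt hy))
    (Eventually.of_forall fun _ => abs_nonneg _)).symm
end

section
/- Let p, q ≥ 1 be integers, let F_n, F ∈ L^∞(ℝ^p × ℝ^q) be a sequence of functions and a function, uniformly bounded in L^∞, and let ε_n > 0 with ε_n → 0. Then F_n converges to F in L¹_loc(ℝ^p × ℝ^q) (i.e. ∫_K |F_n − F| → 0 for every compact K) if and only if for every R₁ > 0, R₂ > 0 and R₃ > 0, ∫_{B_p(0,R₁)} ∫_{B_q(0,R₂)} ∫_{B_p(0,R₃)} |F_n(x + ε_n y, z) − F(x, z)| dy dz dx → 0 as n → ∞, where B_p(0,R) and B_q(0,R) denote the balls of radius R centered at 0 in ℝ^p and ℝ^q respectively. -/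
/-!
Write `v = (x, z)` and `e y = (y, 0)`, and let `S` be a bounded product of balls. By Fubini, the
triple integral is the integral over a ball of `y` of `∫_S |F_n (v + ε_n e y) - F v| dv`.
The bridge to `∫_K |F_n - F|` is the triangle inequality with intermediate term `F (v + ε_n e y)`:
after translating the variable (which enlarges the domain by at most `1` once `ε_n ‖y‖ ≤ 1`), the two
quantities differ by at most `∫_S |F (v + ε_n e y) - F v| dv`. This error tends to `0` for each
fixed `y`, by continuity of translations in `L¹` applied to a truncation of `F`
(`tendsto_setIntegral_translate`); the uniform `L^∞` bound then permits dominated convergence in `y`.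
For the converse, `∫_K |F_n - F|` does not depend on `y`, so it may be averaged over the unit ball.
-/

open MeasureTheory Set Filter

open Metric Topology

section Helpers

lemma integrable_of_abs_le_s18 {α : Type*} [MeasurableSpace α] {μ : Measure α} [IsFiniteMeasure μ]
    {g : α → ℝ} (hg : Measurable g) {c : ℝ} (hc : ∀ x, |g x| ≤ c) : Integrable g μ :=
  Integrable.of_bound hg.aestronglyMeasurable c (ae_of_all _ hc)

lemma triple_integral_eq {α β γ : Type*} [MeasurableSpace α] [MeasurableSpace β]
    [MeasurableSpace γ] (μ : Measure α) (ν : Measure β) (ρ : Measure γ) [IsFiniteMeasure μ]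
    [IsFiniteMeasure ν] [IsFiniteMeasure ρ] {g : (α × β) × γ → ℝ} (hg : Measurable g) {c : ℝ}
    (hc : ∀ x, |g x| ≤ c) :
    ∫ x, ∫ z, ∫ y, g ((x, z), y) ∂ρ ∂ν ∂μ = ∫ y, ∫ v, g (v, y) ∂(μ.prod ν) ∂ρ := by
  have hi : Integrable g ((μ.prod ν).prod ρ) := integrable_of_abs_le_s18 hg hc
  rw [← integral_integral_swap (f := fun v y => g (v, y)) hi,
    integral_prod _ hi.integral_prod_left]

variable {V : Type*} [NormedAddCommGroup V] [NormedSpace ℝ V] [FiniteDimensional ℝ V]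
  [MeasurableSpace V] [BorelSpace V] (μ : Measure V) [μ.IsAddHaarMeasure]

instance isFiniteMeasure_restrict_ball_aux (x : V) (R : ℝ) :
    IsFiniteMeasure (μ.restrict (ball x R)) :=
  ⟨by simpa using measure_ball_lt_top⟩

/-- Translations act continuously on `L¹`. -/
lemma tendsto_integral_translate {g : V → ℝ} (hg : Integrable g μ) :
    Tendsto (fun h : V => ∫ v, |g (v + h) - g v| ∂μ) (𝓝 0) (𝓝 0) := by
  have hg1 : MemLp g 1 μ := memLp_one_iff_integrable.2 hg
  have : Fact ((1 : ENNReal) ≠ ⊤) := ⟨ENNReal.one_ne_top⟩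
  have hc : Continuous fun h : V => (DomAddAct.mk h) +ᵥ hg1.toLp g := by
    have : Continuous fun h : V => DomAddAct.mk h := DomAddAct.continuous_mk
    fun_prop
  have h2 := ((hc.tendsto 0).sub_const (hg1.toLp g)).norm
  have h0 : (DomAddAct.mk (0 : V)) +ᵥ hg1.toLp g = hg1.toLp g := by
    rw [DomAddAct.mk_zero, zero_vadd]
  rw [h0, sub_self, norm_zero] at h2
  refine h2.congr fun h => ?_
  rw [DomAddAct.mk_vadd_toLp, ← MemLp.toLp_sub, L1.norm_eq_integral_norm]
  refine integral_congr_ae ?_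
  filter_upwards [MemLp.coeFn_toLp ((hg1.comp_measurePreserving
    (measurePreserving_vadd h μ)).sub hg1)] with v hv
  refine (congrArg norm hv).trans ?_
  simp [add_comm, Real.norm_eq_abs]

/-- On a ball, the translates of a bounded function converge in `L¹`: only the values on a slightly
larger ball matter, and the function truncated to that ball is integrable. -/
lemma tendsto_setIntegral_translate {G : V → ℝ} (hG : Measurable G) {C : ℝ} (hC : ∀ v, |G v| ≤ C)
    (R : ℝ) {h : ℕ → V} (hh : Tendsto h atTop (𝓝 0)) :
    Tendsto (fun n => ∫ v in ball 0 R, |G (v + h n) - G v| ∂μ) atTop (𝓝 0) := by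
  set g : V → ℝ := (ball (0 : V) (R + 1)).indicator G with hgdef
  have hg : Integrable g μ :=
    (integrable_indicator_iff measurableSet_ball).2 (integrable_of_abs_le_s18 hG hC)
  refine squeeze_zero' (Eventually.of_forall fun n => integral_nonneg fun _ => abs_nonneg _) ?_
    ((tendsto_integral_translate μ hg).comp hh)
  have hlt : ∀ᶠ n in atTop, ‖h n‖ < 1 := by
    have := hh.norm
    rw [norm_zero] at this
    exact this.eventually_lt_const one_pos
  filter_upwards [hlt] with n hn
  have hint : Integrable (fun v => |g (v + h n) - g v|) μ :=
    ((hg.comp_add_right (h n)).sub hg).abs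
  calc ∫ v in ball 0 R, |G (v + h n) - G v| ∂μ
      = ∫ v in ball 0 R, |g (v + h n) - g v| ∂μ := by
        refine setIntegral_congr_fun measurableSet_ball fun v hv => ?_
        rw [mem_ball_zero_iff] at hv
        have h1 : v + h n ∈ ball (0 : V) (R + 1) := by
          rw [mem_ball_zero_iff]; linarith [norm_add_le v (h n)]
        have h2 : v ∈ ball (0 : V) (R + 1) := by
          rw [mem_ball_zero_iff]; linarith
        simp only [hgdef, indicator_of_mem h1, indicator_of_mem h2]
    _ ≤ ∫ v, |g (v + h n) - g v| ∂μ :=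
        setIntegral_le_integral hint (ae_of_all _ fun _ => abs_nonneg _)

lemma setIntegral_translate_le {g : V → ℝ} (hg : Measurable g) {C : ℝ} (hC : ∀ v, |g v| ≤ C)
    (h0 : ∀ v, 0 ≤ g v) (R : ℝ) {w : V} (hw : ‖w‖ ≤ 1) :
    ∫ v in ball 0 R, g (v + w) ∂μ ≤ ∫ v in ball 0 (R + 1), g v ∂μ := by
  rw [← (measurePreserving_add_right μ w).setIntegral_preimage_emb
    (measurableEmbedding_addRight w) g (ball 0 (R + 1))]
  have hsub : ball (0 : V) R ⊆ (fun x => x + w) ⁻¹' ball 0 (R + 1) := by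
    intro v hv
    rw [mem_ball_zero_iff] at hv
    rw [mem_preimage, mem_ball_zero_iff]
    linarith [norm_add_le v w]
  refine setIntegral_mono_set ?_ (ae_of_all _ fun v => h0 _) hsub.eventuallyLE
  exact ((measurePreserving_add_right μ w).integrableOn_comp_preimage
    (measurableEmbedding_addRight w)).2 (integrable_of_abs_le_s18 hg hC)

/-- Triangle inequality comparing the shifted difference with `|f - G|`; the translated term is
absorbed by enlarging the ball. -/
lemma shifted_le {f G : V → ℝ} (hf : Measurable f) (hG : Measurable G) {C : ℝ}
    (hfC : ∀ v, |f v| ≤ C) (hGC : ∀ v, |G v| ≤ C) (R : ℝ) {w : V} (hw : ‖w‖ ≤ 1) :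
    ∫ v in ball 0 R, |f (v + w) - G v| ∂μ ≤
      ∫ v in ball 0 (R + 1), |f v - G v| ∂μ + ∫ v in ball 0 R, |G (v + w) - G v| ∂μ := by
  have hb : ∀ a b : V, |f a - G b| ≤ 2 * C := fun a b =>
    (abs_sub _ _).trans (by linarith [hfC a, hGC b])
  have hb' : ∀ a b : V, |G a - G b| ≤ 2 * C := fun a b =>
    (abs_sub _ _).trans (by linarith [hGC a, hGC b])
  have h1 := setIntegral_translate_le μ (g := fun v => |f v - G v|) (by fun_prop) (C := 2 * C)
    (fun v => by rw [abs_abs]; exact hb v v) (fun v => abs_nonneg _) R hw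
  have i1 : Integrable (fun v => |f (v + w) - G (v + w)|) (μ.restrict (ball 0 R)) :=
    integrable_of_abs_le_s18 (by fun_prop) (fun v => by rw [abs_abs]; exact hb _ _)
  have i2 : Integrable (fun v => |G (v + w) - G v|) (μ.restrict (ball 0 R)) :=
    integrable_of_abs_le_s18 (by fun_prop) (fun v => by rw [abs_abs]; exact hb' _ _)
  have i3 : Integrable (fun v => |f (v + w) - G v|) (μ.restrict (ball 0 R)) :=
    integrable_of_abs_le_s18 (by fun_prop) (fun v => by rw [abs_abs]; exact hb _ _)
  have h2 := integral_mono i3 (i1.add i2) (fun v => abs_sub_le _ (G (v + w)) _)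
  simp only [Pi.add_apply] at h2
  rw [integral_add i1 i2] at h2
  linarith

/-- The comparison of `shifted_le` in the opposite direction. -/
lemma le_shifted {f G : V → ℝ} (hf : Measurable f) (hG : Measurable G) {C : ℝ}
    (hfC : ∀ v, |f v| ≤ C) (hGC : ∀ v, |G v| ≤ C) (R : ℝ) {w : V} (hw : ‖w‖ ≤ 1) :
    ∫ v in ball 0 R, |f v - G v| ∂μ ≤
      ∫ v in ball 0 (R + 1), |f (v + w) - G v| ∂μ +
        ∫ v in ball 0 (R + 1), |G (v + w) - G v| ∂μ := by
  have hb : ∀ a b : V, |f a - G b| ≤ 2 * C := fun a b =>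
    (abs_sub _ _).trans (by linarith [hfC a, hGC b])
  have hb' : ∀ a b : V, |G a - G b| ≤ 2 * C := fun a b =>
    (abs_sub _ _).trans (by linarith [hGC a, hGC b])
  have h1 := setIntegral_translate_le μ (g := fun v => |f (v + w) - G (v + w)|) (by fun_prop)
    (C := 2 * C) (fun v => by rw [abs_abs]; exact hb _ _) (fun v => abs_nonneg _) R
    (w := -w) (by rwa [norm_neg])
  simp only [neg_add_cancel_right] at h1
  have i1 : Integrable (fun v => |f (v + w) - G (v + w)|) (μ.restrict (ball 0 (R + 1))) :=
    integrable_of_abs_le_s18 (by fun_prop) (fun v => by rw [abs_abs]; exact hb _ _)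
  have i2 : Integrable (fun v => |G (v + w) - G v|) (μ.restrict (ball 0 (R + 1))) :=
    integrable_of_abs_le_s18 (by fun_prop) (fun v => by rw [abs_abs]; exact hb' _ _)
  have i3 : Integrable (fun v => |f (v + w) - G v|) (μ.restrict (ball 0 (R + 1))) :=
    integrable_of_abs_le_s18 (by fun_prop) (fun v => by rw [abs_abs]; exact hb _ _)
  have h2 := integral_mono i1 (i3.add i2) (fun v => by
    have := abs_sub_le (f (v + w)) (G v) (G (v + w))
    rwa [abs_sub_comm (G v)] at this)
  simp only [Pi.add_apply] at h2
  rw [integral_add i3 i2] at h2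
  linarith

end Helpers

set_option maxHeartbeats 1000000 in
theorem stmt18 (p q : ℕ) (hp : 1 ≤ p) (hq : 1 ≤ q)
    (Fn : ℕ → (Fin p → ℝ) × (Fin q → ℝ) → ℝ) (F : (Fin p → ℝ) × (Fin q → ℝ) → ℝ)
    (hFnm : ∀ n, Measurable (Fn n)) (hFm : Measurable F)
    (C : ℝ) (hCn : ∀ n x, |Fn n x| ≤ C) (hCF : ∀ x, |F x| ≤ C)
    (ε : ℕ → ℝ) (hε : ∀ n, 0 < ε n) (hε0 : Tendsto ε atTop (nhds 0)) :
    (∀ K : Set ((Fin p → ℝ) × (Fin q → ℝ)), IsCompact K →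
        Tendsto (fun n => ∫ x in K, |Fn n x - F x|) atTop (nhds 0)) ↔
    (∀ R₁ R₂ R₃ : ℝ, 0 < R₁ → 0 < R₂ → 0 < R₃ →
        Tendsto (fun n => ∫ x in Metric.ball (0 : Fin p → ℝ) R₁,
            ∫ z in Metric.ball (0 : Fin q → ℝ) R₂,
            ∫ y in Metric.ball (0 : Fin p → ℝ) R₃,
              |Fn n (x + ε n • y, z) - F (x, z)|)
          atTop (nhds 0)) := by
  have : (volume : Measure ((Fin p → ℝ) × (Fin q → ℝ))).IsAddHaarMeasure :=
    Measure.prod.instIsAddHaarMeasure _ _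
  -- `w n y` is the translation vector `(ε_n y, 0)`
  set w : ℕ → (Fin p → ℝ) → (Fin p → ℝ) × (Fin q → ℝ) := fun n y => (ε n • y, 0) with hw
  have hwc : ∀ n, Measurable (w n) := fun n => by
    have : Continuous (w n) := by fun_prop
    exact this.measurable
  have hw0 : ∀ y, Tendsto (fun n => w n y) atTop (nhds 0) := fun y => by
    have h1 : Tendsto (fun n => ε n • y) atTop (nhds 0) := by
      simpa using hε0.smul_const y
    exact h1.prodMk_nhds tendsto_const_nhds
  have hwn : ∀ n y, ‖w n y‖ = ε n * ‖y‖ := fun n y => by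
    rw [hw, Prod.norm_mk, norm_zero, norm_smul, Real.norm_eq_abs, abs_of_pos (hε n)]
    exact max_eq_left (mul_nonneg (hε n).le (norm_nonneg _))
  have hb : ∀ n a b, |Fn n a - F b| ≤ 2 * C := fun n a b =>
    (abs_sub _ _).trans (by linarith [hCn n a, hCF b])
  have hb' : ∀ a b, |F a - F b| ≤ 2 * C := fun a b =>
    (abs_sub _ _).trans (by linarith [hCF a, hCF b])
  have hHm : ∀ n, Measurable fun u : ((Fin p → ℝ) × (Fin q → ℝ)) × (Fin p → ℝ) =>
      |Fn n (u.1 + w n u.2) - F u.1| := fun n => by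
    have := hFnm n; have := hwc n
    fun_prop
  have hTm : ∀ n, Measurable fun u : ((Fin p → ℝ) × (Fin q → ℝ)) × (Fin p → ℝ) =>
      |F (u.1 + w n u.2) - F u.1| := fun n => by
    have := hwc n
    fun_prop
  have htriple : ∀ R₁ R₂ R₃ n, (∫ x in Metric.ball (0 : Fin p → ℝ) R₁,
      ∫ z in Metric.ball (0 : Fin q → ℝ) R₂, ∫ y in Metric.ball (0 : Fin p → ℝ) R₃,
        |Fn n (x + ε n • y, z) - F (x, z)|) = ∫ y in Metric.ball (0 : Fin p → ℝ) R₃,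
        ∫ v in ball (0 : Fin p → ℝ) R₁ ×ˢ ball (0 : Fin q → ℝ) R₂,
          |Fn n (v + w n y) - F v| := fun R₁ R₂ R₃ n => by
    have := triple_integral_eq (volume.restrict (ball (0 : Fin p → ℝ) R₁))
      (volume.restrict (ball (0 : Fin q → ℝ) R₂)) (volume.restrict (ball (0 : Fin p → ℝ) R₃))
      (hHm n) (c := 2 * C) (fun u => by rw [abs_abs]; exact hb n _ _)
    rw [Measure.prod_restrict, ← Measure.volume_eq_prod] at this
    simpa [hw] using this
  -- dominated convergence in `y`, for integrands of the two shapes needed below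
  have hdct : ∀ (R R₃ : ℝ) (f : ℕ → ((Fin p → ℝ) × (Fin q → ℝ)) × (Fin p → ℝ) → ℝ),
      (∀ n, Measurable (f n)) → (∀ n u, |f n u| ≤ 2 * C) →
      (∀ y, Tendsto (fun n => ∫ v in ball (0 : (Fin p → ℝ) × (Fin q → ℝ)) R, f n (v, y)) atTop
        (nhds 0)) →
      Tendsto (fun n => ∫ y in ball (0 : Fin p → ℝ) R₃,
        ∫ v in ball (0 : (Fin p → ℝ) × (Fin q → ℝ)) R, f n (v, y)) atTop (nhds 0) := by
    intro R R₃ f hfm hfb hfl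
    have := tendsto_integral_of_dominated_convergence
      (μ := volume.restrict (ball (0 : Fin p → ℝ) R₃))
      (F := fun n y => ∫ v in ball (0 : (Fin p → ℝ) × (Fin q → ℝ)) R, f n (v, y))
      (f := fun _ => 0)
      (fun _ => 2 * C * volume.real (ball (0 : (Fin p → ℝ) × (Fin q → ℝ)) R))
      (fun n => (integrable_of_abs_le_s18 (hfm n) (hfb n)).integral_prod_right.aestronglyMeasurable)
      (integrable_const _)
      (fun n => ae_of_all _ fun y =>
        norm_setIntegral_le_of_norm_le_const measure_ball_lt_top (fun v _ => hfb n (v, y)))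
      (ae_of_all _ hfl)
    simpa using this
  have hsmall : ∀ y : Fin p → ℝ, ∀ᶠ n in atTop, ‖w n y‖ ≤ 1 := fun y => by
    have := (hw0 y).norm
    rw [norm_zero] at this
    exact (this.eventually_lt_const one_pos).mono fun _ h => h.le
  constructor
  · intro hL R₁ R₂ R₃ _ _ _
    simp only [htriple]
    have hL' : ∀ R : ℝ, Tendsto (fun n => ∫ v in ball (0 : (Fin p → ℝ) × (Fin q → ℝ)) R,
        |Fn n v - F v|) atTop (nhds 0) := fun R => by
      refine squeeze_zero (fun n => integral_nonneg fun _ => abs_nonneg _) (fun n => ?_)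
        (hL (closedBall 0 R) (isCompact_closedBall _ _))
      refine setIntegral_mono_set ?_ (ae_of_all _ fun v => abs_nonneg _)
        ball_subset_closedBall.eventuallyLE
      have hn := hFnm n
      refine IntegrableOn.mono_set (t := ball 0 (R + 1)) ?_ (closedBall_subset_ball (by linarith))
      exact integrable_of_abs_le_s18 (by fun_prop) (fun v => by rw [abs_abs]; exact hb n _ _)
    have hsub : ball (0 : Fin p → ℝ) R₁ ×ˢ ball (0 : Fin q → ℝ) R₂ ⊆ ball 0 (max R₁ R₂) := by
      rw [← Prod.mk_zero_zero, ← ball_prod_same]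
      exact prod_mono (ball_subset_ball (le_max_left _ _)) (ball_subset_ball (le_max_right _ _))
    have hlim := hdct (max R₁ R₂) R₃ (fun n u => |Fn n (u.1 + w n u.2) - F u.1|) hHm
      (fun n u => by rw [abs_abs]; exact hb n _ _) (fun y => by
        refine squeeze_zero' (Eventually.of_forall fun n => integral_nonneg fun _ => abs_nonneg _)
          ((hsmall y).mono fun n hn => shifted_le volume (hFnm n) hFm (hCn n) hCF _ hn) ?_
        simpa using (hL' (max R₁ R₂ + 1)).add
          (tendsto_setIntegral_translate volume hFm hCF (max R₁ R₂) (hw0 y)))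
    refine squeeze_zero (fun n => integral_nonneg fun _ => integral_nonneg fun _ => abs_nonneg _)
      (fun n => ?_) hlim
    refine integral_mono_of_nonneg (ae_of_all _ fun y => integral_nonneg fun _ => abs_nonneg _)
      (integrable_of_abs_le_s18 (hHm n)
        (fun u => by rw [abs_abs]; exact hb n _ _)).integral_prod_right (ae_of_all _ fun y => ?_)
    refine setIntegral_mono_set ?_ (ae_of_all _ fun v => abs_nonneg _) hsub.eventuallyLE
    exact integrable_of_abs_le_s18 ((hHm n).comp (by fun_prop : Measurable fun v => (v, y)))
      (fun v => by simp only [abs_abs]; exact hb n _ _)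
  · intro hT K hK
    obtain ⟨R, hR0, hR⟩ := hK.isBounded.subset_ball_lt 0 0
    have hT1 := hT (R + 1) (R + 1) 1 (by linarith) (by linarith) one_pos
    simp only [htriple, ball_prod_same, Prod.mk_zero_zero] at hT1
    have hE := hdct (R + 1) 1 (fun n u => |F (u.1 + w n u.2) - F u.1|) hTm
      (fun n u => by rw [abs_abs]; exact hb' _ _)
      (fun y => tendsto_setIntegral_translate volume hFm hCF (R + 1) (hw0 y))
    have hm : 0 < volume.real (ball (0 : Fin p → ℝ) 1) :=
      ENNReal.toReal_pos (measure_ball_pos _ _ one_pos).ne' measure_ball_lt_top.ne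
    have hsum := (hT1.add hE).const_mul (volume.real (ball (0 : Fin p → ℝ) 1))⁻¹
    rw [add_zero, mul_zero] at hsum
    refine squeeze_zero' (Eventually.of_forall fun n => integral_nonneg fun _ => abs_nonneg _) ?_
      hsum
    filter_upwards [hε0.eventually_lt_const one_pos] with n hn
    have hmF := hFnm n
    have hKR : ∫ v in K, |Fn n v - F v| ≤ ∫ v in ball 0 R, |Fn n v - F v| :=
      setIntegral_mono_set (integrable_of_abs_le_s18 (by fun_prop)
        (fun v => by rw [abs_abs]; exact hb n _ _)) (ae_of_all _ fun v => abs_nonneg _)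
        hR.eventuallyLE
    rw [le_inv_mul_iff₀ hm]
    have i1 := (integrable_of_abs_le_s18 (μ := (volume.restrict
      (ball (0 : (Fin p → ℝ) × (Fin q → ℝ)) (R + 1))).prod (volume.restrict
      (ball (0 : Fin p → ℝ) 1))) (hHm n)
        (fun u => by rw [abs_abs]; exact hb n _ _)).integral_prod_right
    have i2 := (integrable_of_abs_le_s18 (μ := (volume.restrict
      (ball (0 : (Fin p → ℝ) × (Fin q → ℝ)) (R + 1))).prod (volume.restrict
      (ball (0 : Fin p → ℝ) 1))) (hTm n)
        (fun u => by rw [abs_abs]; exact hb' _ _)).integral_prod_right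
    rw [← integral_add i1 i2]
    -- the left-hand side is the integral of a constant over the unit ball in the variable `y`
    rw [← smul_eq_mul, ← setIntegral_const]
    refine setIntegral_mono_on (integrable_const _) (i1.add i2) measurableSet_ball fun y hy => ?_
    refine hKR.trans (le_shifted volume (hFnm n) hFm (hCn n) hCF R (w := w n y) ?_)
    rw [mem_ball_zero_iff] at hy
    rw [hwn]
    nlinarith [hε n, norm_nonneg y]
end
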